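/- Let A be an extra special associative algebra over ℂ. If A is not isomorphic to J₁ then t(A) = 2·dim(A); if A is isomorphic to J₁ then t(A) = 3 (equivalently, dim M(J₁) = 1). -/

import Mathlib

/-! Let `z` span `Z(A) = A'`, so that `x * y = B x y • z` for a nonzero bilinear form `B` whose
two-sided radical is `Z(A)`. A form `f` is a cocycle iff
`B x y * f z w = B y w * f x z` for all `x y w`. If `f z w₀ ≠ 0` for some `w₀`, this identity
makes `B` a multiple of `q ⊗ q` with `q = f (·) z`; the radical of `B` then contains `ker q`, so
`ker q` is one-dimensional and `A ≅ J₁` (`isJ1_of_cocycle`). Hence, if `A ≇ J₁`, the cocycles are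
exactly the forms vanishing on `Z(A)` in each variable, i.e. the forms on `A ⧸ Z(A)`
(`finrank_cocycles`), a space of dimension `(n - 1)²`. The coboundaries are the multiples of `B`,
so `dim M(A) = (n - 1)² - 1 = n² - 2n`.

For `J₁`, with basis `x, z`, a cocycle is determined by `f x x` and `f x z = f z x`; modulo
coboundaries only the second parameter remains, and `dim M(J₁) = 1`. -/

open Module

noncomputable section Defs

variable (A : Type*) [NonUnitalRing A] [Module ℂ A]

/-- `A` is nilpotent: there is an `n` such that every product of `n` elements of `A`
is zero (by associativity it suffices to consider left-normed products). -/
def IsNilpotentAlgebra : Prop :=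
  ∃ n : ℕ, ∀ (x : A) (l : List A), l.length + 1 = n → l.foldl (· * ·) x = 0

/-- The derived ideal `A' = AA`: the linear span of all products in `A`. -/
def derivedIdeal : Submodule ℂ A :=
  Submodule.span ℂ {a : A | ∃ x y : A, x * y = a}

/-- The space of 2-cocycles: bilinear maps `f : A × A → ℂ` with `f(xy,z) = f(x,yz)`. -/
def Cocycles : Submodule ℂ (A →ₗ[ℂ] A →ₗ[ℂ] ℂ) where
  carrier := {f | ∀ x y z : A, f (x * y) z = f x (y * z)}
  add_mem' := by
    intro f g hf hg x y z
    simp [hf x y z, hg x y z]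
  zero_mem' := by
    intro x y z
    simp
  smul_mem' := by
    intro c f hf x y z
    simp [hf x y z]

/-- The space of 2-coboundaries: bilinear maps of the form `f(x,y) = g(xy)`. -/
def Coboundaries : Submodule ℂ (A →ₗ[ℂ] A →ₗ[ℂ] ℂ) where
  carrier := {f | ∃ g : A →ₗ[ℂ] ℂ, ∀ x y : A, f x y = g (x * y)}
  add_mem' := by
    rintro f₁ f₂ ⟨g₁, h₁⟩ ⟨g₂, h₂⟩
    exact ⟨g₁ + g₂, fun x y => by simp [h₁ x y, h₂ x y]⟩
  zero_mem' := ⟨0, by simp⟩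
  smul_mem' := by
    rintro c f ⟨g, h⟩
    exact ⟨c • g, fun x y => by simp [h x y]⟩

/-- The dimension of the multiplier `M(A) = H²(A, ℂ)`, the quotient of the cocycles
by the coboundaries. -/
def multDim : ℕ :=
  Module.finrank ℂ ((Cocycles A).map (Coboundaries A).mkQ)

/-- `t(A) = (dim A)² - dim M(A)`. -/
def tInv : ℤ :=
  (Module.finrank ℂ A : ℤ) ^ 2 - (multDim A : ℤ)

/-- A (two-sided) ideal of `A`. -/
def IsIdealOf (I : Submodule ℂ A) : Prop :=
  ∀ a : A, ∀ x ∈ I, a * x ∈ I ∧ x * a ∈ I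

/-- `A ≅ J₁ ⊕ A(k)`: `A` has a basis `x, z, a₁, …, a_k` whose only nonzero
product of basis vectors is `x·x = z`. -/
def IsJ1SumAbelian (k : ℕ) : Prop :=
  ∃ b : Basis (Fin (k + 2)) ℂ A,
    b 0 * b 0 = b 1 ∧ ∀ i j : Fin (k + 2), ¬(i = 0 ∧ j = 0) → b i * b j = 0

/-- `A ≅ J₁`: `A` has a basis `x, z` with only nonzero product `x·x = z`. -/
def IsJ1 : Prop := IsJ1SumAbelian A 0

/-- `A ≅ C₃`: `A` has a basis `x, z, z'` with only nonzero products
`x·x = z`, `x·z = z·x = z'`. -/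
def IsC3 : Prop :=
  ∃ b : Basis (Fin 3) ℂ A,
    b 0 * b 0 = b 1 ∧ b 0 * b 1 = b 2 ∧ b 1 * b 0 = b 2 ∧
    b 0 * b 2 = 0 ∧ b 2 * b 0 = 0 ∧ b 1 * b 1 = 0 ∧ b 1 * b 2 = 0 ∧
    b 2 * b 1 = 0 ∧ b 2 * b 2 = 0

variable [SMulCommClass ℂ A A] [IsScalarTower ℂ A A]

/-- The center `Z(A) = {z : za = az = 0 for all a}`. -/
def centerSub : Submodule ℂ A where
  carrier := {z | ∀ a : A, z * a = 0 ∧ a * z = 0}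
  add_mem' := by
    intro x y hx hy a
    constructor
    · rw [add_mul, (hx a).1, (hy a).1, add_zero]
    · rw [mul_add, (hx a).2, (hy a).2, add_zero]
  zero_mem' := by
    intro a
    simp
  smul_mem' := by
    intro c x hx a
    constructor
    · rw [smul_mul_assoc, (hx a).1, smul_zero]
    · rw [mul_smul_comm, (hx a).2, smul_zero]

/-- `A` is extra special: `Z(A) = A'` and `dim Z(A) = 1`. -/
def IsExtraSpecialAlg : Prop :=
  centerSub A = derivedIdeal A ∧ Module.finrank ℂ (centerSub A) = 1

/-- `A ≅ E ⊕ A(k)` for some extra special algebra `E` of dimension `n`: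
`A` decomposes as an internal direct sum of a subalgebra `E` which is extra special
of dimension `n` and a central subspace `Z` of dimension `k` all of whose products
with `A` vanish. -/
def HasExtraSpecialDecomp (n k : ℕ) : Prop :=
  ∃ (E : NonUnitalSubalgebra ℂ A) (Z : Submodule ℂ A),
    IsCompl E.toSubmodule Z ∧ (∀ z ∈ Z, ∀ a : A, z * a = 0 ∧ a * z = 0) ∧
    IsExtraSpecialAlg ↥E ∧ Module.finrank ℂ ↥E = n ∧ Module.finrank ℂ ↥Z = k

end Defs

section Aux

lemma finrank_map_mkQ_add_finrank {V : Type*} [AddCommGroup V] [Module ℂ V]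
    [FiniteDimensional ℂ V] {P Q : Submodule ℂ V} (hPQ : P ≤ Q) :
    finrank ℂ (Q.map P.mkQ) + finrank ℂ P = finrank ℂ Q := by
  have h := LinearMap.finrank_range_add_finrank_ker (P.mkQ.domRestrict Q)
  rw [LinearMap.range_domRestrict, LinearMap.ker_domRestrict, Submodule.ker_mkQ] at h
  rw [← h, ← (Submodule.submoduleOfEquivOfLe hPQ).finrank_eq]
  rfl

variable {A : Type*} [NonUnitalRing A] [Module ℂ A]

lemma coboundaries_le_cocycles : Coboundaries A ≤ Cocycles A := by
  rintro f ⟨g, hg⟩ x y z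
  rw [hg, hg, mul_assoc]

lemma multDim_add_finrank_coboundaries [FiniteDimensional ℂ A] :
    multDim A + finrank ℂ (Coboundaries A) = finrank ℂ (Cocycles A) :=
  finrank_map_mkQ_add_finrank coboundaries_le_cocycles

variable [SMulCommClass ℂ A A] [IsScalarTower ℂ A A]

/-- The form `B x y = φ (x * y)` describes the multiplication through a generator `z` of the
center. -/
lemma exists_form (h : IsExtraSpecialAlg A) :
    ∃ (z : A) (φ : A →ₗ[ℂ] ℂ), φ z = 1 ∧ z ≠ 0 ∧ centerSub A = Submodule.span ℂ {z} ∧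
      (∀ x y : A, x * y = φ (x * y) • z) ∧ ∃ x y : A, φ (x * y) ≠ 0 := by
  obtain ⟨h1, h2⟩ := h
  obtain ⟨⟨z, hz⟩, hz0, hspan⟩ := finrank_eq_one_iff'.1 h2
  have hz0' : z ≠ 0 := fun h => hz0 (Subtype.ext h)
  have hZ : centerSub A = Submodule.span ℂ {z} := by
    apply le_antisymm
    · intro w hw
      obtain ⟨c, hc⟩ := hspan ⟨w, hw⟩
      exact Submodule.mem_span_singleton.2 ⟨c, congrArg Subtype.val hc⟩
    · rwa [Submodule.span_singleton_le_iff_mem]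
  obtain ⟨ψ, hψ⟩ : ∃ ψ : Dual ℂ A, ψ z ≠ 0 := by
    by_contra! H
    exact hz0' ((Module.forall_dual_apply_eq_zero_iff ℂ z).1 H)
  have hφ : ((ψ z)⁻¹ • ψ) z = 1 := by simp [hψ]
  have hmul : ∀ x y : A, x * y = ((ψ z)⁻¹ • ψ) (x * y) • z := by
    intro x y
    have hm : x * y ∈ centerSub A := by
      rw [h1]
      exact Submodule.subset_span ⟨x, y, rfl⟩
    rw [hZ] at hm
    obtain ⟨c, hc⟩ := Submodule.mem_span_singleton.1 hm
    rw [← hc, map_smul, hφ, smul_eq_mul, mul_one]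
  refine ⟨z, (ψ z)⁻¹ • ψ, hφ, hz0', hZ, hmul, ?_⟩
  by_contra! H
  have hbot : derivedIdeal A = ⊥ := by
    rw [derivedIdeal, Submodule.span_eq_bot]
    rintro _ ⟨x, y, rfl⟩
    rw [hmul, H, zero_smul]
  rw [h1, hbot] at hz
  exact hz0' ((Submodule.mem_bot ℂ).1 hz)

/-- A rank-one symmetric multiplication with center spanned by `z` gives `J₁`: with `q x ≠ 0`
and `ker q` central, `x` and `x * x` form the required basis. -/
lemma isJ1_of_rank_one {z : A} (hz0 : z ≠ 0) (hZ : centerSub A = Submodule.span ℂ {z})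
    (q : A →ₗ[ℂ] ℂ) (c : ℂ) (hc : c ≠ 0) (hq : ∃ x, q x ≠ 0)
    (hmul : ∀ x y : A, x * y = (c * q x * q y) • z) : IsJ1 A := by
  obtain ⟨x, hx⟩ := hq
  have hker : ∀ v, q v = 0 → v ∈ Submodule.span ℂ {z} := by
    intro v hv
    rw [← hZ]
    intro a
    simp [hmul, hv]
  have hzc : z ∈ centerSub A := hZ ▸ Submodule.mem_span_singleton_self z
  have hqz : q z = 0 := by
    have h0 := (hzc x).1
    rw [hmul] at h0
    simpa [hc, hx, hz0] using h0
  have hxx : c * q x * q x ≠ 0 := by simp [hc, hx]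
  have hli : LinearIndependent ℂ ![x, x * x] := by
    rw [LinearIndependent.pair_iff]
    intro s t hst
    have hs : s = 0 := by
      have := congrArg q hst
      rw [hmul] at this
      simpa [hqz, hx] using this
    refine ⟨hs, ?_⟩
    rw [hs, hmul, zero_smul, zero_add, smul_smul] at hst
    have := (smul_eq_zero.1 hst).resolve_right hz0
    exact (mul_eq_zero.1 this).resolve_right hxx
  have hsp : ⊤ ≤ Submodule.span ℂ (Set.range ![x, x * x]) := by
    intro a _
    have h1 : q (a - (q a / q x) • x) = 0 := by simp [hx]
    obtain ⟨d, hd⟩ := Submodule.mem_span_singleton.1 (hker _ h1)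
    rw [Matrix.range_cons_cons_empty, Submodule.mem_span_pair]
    refine ⟨q a / q x, d * (c * q x * q x)⁻¹, ?_⟩
    rw [hmul x x, smul_smul, mul_assoc d, inv_mul_cancel₀ hxx, mul_one, hd]
    abel
  refine ⟨Basis.mk hli hsp, by simp, ?_⟩
  have hxz : x * x ∈ centerSub A := by
    rw [hmul]
    exact Submodule.smul_mem _ _ hzc
  intro i j hij
  fin_cases i <;> fin_cases j
  · simp at hij
  · simpa using (hxz x).2
  · simpa using (hxz x).1
  · simpa using (hxz (x * x)).1

/-- A cocycle that does not vanish on the center forces the multiplication to have rank one. -/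
lemma isJ1_of_cocycle {z : A} {φ : A →ₗ[ℂ] ℂ} (hz0 : z ≠ 0)
    (hZ : centerSub A = Submodule.span ℂ {z}) (hmul : ∀ x y : A, x * y = φ (x * y) • z)
    (hne : ∃ x y : A, φ (x * y) ≠ 0) {f : A →ₗ[ℂ] A →ₗ[ℂ] ℂ} (hf : f ∈ Cocycles A)
    {w : A} (hw : f z w ≠ 0) : IsJ1 A := by
  have key : ∀ x y w, φ (x * y) * f z w = φ (y * w) * f x z := by
    intro x y w
    have := hf x y w
    rw [hmul x y, hmul y w] at this
    simpa using this
  -- Two applications of the identity give `φ (x * y) = c * q x * q y` with `q = f (·) z`.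
  have hB : ∀ x y, φ (x * y) = φ (w * w) / (f z w * f z w) * f x z * f y z := by
    intro x y
    have h1 := key x y w
    have h2 := key y w w
    field_simp
    linear_combination f z w * h1 + f x z * h2
  obtain ⟨x, y, hxy⟩ := hne
  rw [hB] at hxy
  refine isJ1_of_rank_one hz0 hZ (f.flip z) (φ (w * w) / (f z w * f z w)) ?_ ⟨x, ?_⟩ ?_
  · intro h
    simp [h] at hxy
  · intro h
    rw [LinearMap.flip_apply] at h
    simp [h] at hxy
  · intro x y
    rw [hmul, hB]
    rfl

/-- If every cocycle vanishes on the center, the cocycles are the forms on `A ⧸ Z(A)`. -/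
lemma finrank_cocycles [FiniteDimensional ℂ A] {z : A} {φ : A →ₗ[ℂ] ℂ}
    (hZ : centerSub A = Submodule.span ℂ {z}) (hmul : ∀ x y : A, x * y = φ (x * y) • z)
    (hne : ∃ x y : A, φ (x * y) ≠ 0) (hv : ∀ f ∈ Cocycles A, ∀ w, f z w = 0) :
    finrank ℂ (Cocycles A) = finrank ℂ (A ⧸ centerSub A) * finrank ℂ (A ⧸ centerSub A) := by
  let Q := A ⧸ centerSub A
  let π : A →ₗ[ℂ] Q := (centerSub A).mkQ
  let Φ : (Q →ₗ[ℂ] Q →ₗ[ℂ] ℂ) →ₗ[ℂ] (A →ₗ[ℂ] A →ₗ[ℂ] ℂ) :=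
    { toFun := fun f => f.compl₁₂ π π
      map_add' := fun _ _ => rfl
      map_smul' := fun _ _ => rfl }
  have hΦ : ∀ f x y, Φ f x y = f (π x) (π y) := fun _ _ _ => rfl
  have hinj : Function.Injective Φ := by
    intro f g hfg
    ext x y
    exact LinearMap.congr_fun (LinearMap.congr_fun hfg x) y
  have hπmul : ∀ x y : A, π (x * y) = 0 := by
    intro x y
    rw [hmul]
    refine (Submodule.Quotient.mk_eq_zero _).2 ?_
    rw [hZ]
    exact Submodule.smul_mem _ _ (Submodule.mem_span_singleton_self z)
  have hrange : LinearMap.range Φ = Cocycles A := by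
    apply le_antisymm
    · rintro _ ⟨f, rfl⟩ x y w
      rw [hΦ, hΦ, hπmul, hπmul]
      simp
    · intro f hf
      have hl : centerSub A ≤ LinearMap.ker f := by
        rw [hZ, Submodule.span_singleton_le_iff_mem, LinearMap.mem_ker]
        ext w
        exact hv f hf w
      have hr : ∀ x, f x z = 0 := by
        intro x
        obtain ⟨y, w, hyw⟩ := hne
        have := hf x y w
        rw [hmul x y, hmul y w] at this
        simpa [hv f hf, hyw] using this
      let g : A →ₗ[ℂ] Q →ₗ[ℂ] ℂ := ((centerSub A).liftQ f hl).flip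
      have hgl : centerSub A ≤ LinearMap.ker g := by
        refine hZ.trans_le ?_
        rw [Submodule.span_singleton_le_iff_mem, LinearMap.mem_ker]
        ext x
        exact hr x
      exact ⟨((centerSub A).liftQ g hgl).flip, rfl⟩
  rw [← hrange, LinearMap.finrank_range_of_inj hinj, Module.finrank_linearMap,
    Module.finrank_linearMap, Module.finrank_self, mul_one]

lemma finrank_coboundaries {z : A} {φ : A →ₗ[ℂ] ℂ}
    (hmul : ∀ x y : A, x * y = φ (x * y) • z) (hne : ∃ x y : A, φ (x * y) ≠ 0) :
    finrank ℂ (Coboundaries A) = 1 := by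
  have hspan : Coboundaries A = Submodule.span ℂ {(LinearMap.mul ℂ A).compr₂ φ} := by
    apply le_antisymm
    · rintro f ⟨g, hg⟩
      refine Submodule.mem_span_singleton.2 ⟨g z, ?_⟩
      ext x y
      have : f x y = φ (x * y) * g z := by
        rw [hg, hmul x y, map_smul, ← hmul, smul_eq_mul]
      simp [this, mul_comm]
    · rw [Submodule.span_singleton_le_iff_mem]
      exact ⟨φ, fun _ _ => rfl⟩
  rw [hspan, finrank_span_singleton]
  intro h
  obtain ⟨x, y, hxy⟩ := hne
  exact hxy (LinearMap.congr_fun (LinearMap.congr_fun h x) y)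

lemma multDim_of_isJ1 (h : IsJ1 A) : finrank ℂ A = 2 ∧ multDim A = 1 := by
  obtain ⟨b, h00, h0⟩ := h
  have h01 : b 0 * b 1 = 0 := h0 0 1 (by simp)
  have h10 : b 1 * b 0 = 0 := h0 1 0 (by simp)
  have h11 : b 1 * b 1 = 0 := h0 1 1 (by simp)
  refine ⟨by simp [finrank_eq_card_basis b], ?_⟩
  -- The symmetric form with `C x z = C z x = 1` represents a generator of `M(J₁)`.
  let C : A →ₗ[ℂ] A →ₗ[ℂ] ℂ :=
    (LinearMap.mul ℂ ℂ).compl₁₂ (b.coord 0) (b.coord 1) +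
      (LinearMap.mul ℂ ℂ).compl₁₂ (b.coord 1) (b.coord 0)
  have hC : ∀ x y, C x y = b.coord 0 x * b.coord 1 y + b.coord 1 x * b.coord 0 y :=
    fun _ _ => rfl
  have hexp : ∀ x : A, x = b.coord 0 x • b 0 + b.coord 1 x • b 1 := by
    intro x
    have := b.sum_repr x
    rw [Fin.sum_univ_two] at this
    exact this.symm
  have hprod : ∀ x y : A, x * y = (b.coord 0 x * b.coord 0 y) • b 1 := by
    intro x y
    conv_lhs => rw [hexp x, hexp y]
    simp only [add_mul, mul_add, smul_mul_assoc, mul_smul_comm, h00, h01, h10, h11, smul_zero,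
      add_zero, smul_smul, mul_comm (b.coord 0 y)]
  have hCc : C ∈ Cocycles A := by
    intro x y w
    rw [hC, hC, hprod x y, hprod y w]
    simp
    ring
  have hCb : C ∉ Coboundaries A := by
    rintro ⟨g, hg⟩
    have := hg (b 0) (b 1)
    rw [h01, hC] at this
    simp at this
  have hspan : (Cocycles A).map (Coboundaries A).mkQ
      = Submodule.span ℂ {(Coboundaries A).mkQ C} := by
    apply le_antisymm
    · rintro _ ⟨f, hf, rfl⟩
      refine Submodule.mem_span_singleton.2 ⟨f (b 0) (b 1), ?_⟩
      rw [← map_smul, ← sub_eq_zero, ← map_sub]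
      refine (Submodule.Quotient.mk_eq_zero _).2 ?_
      have e1 : f (b 1) (b 0) = f (b 0) (b 1) := by
        have := hf (b 0) (b 0) (b 0)
        rwa [h00] at this
      have e2 : f (b 1) (b 1) = 0 := by
        have := hf (b 0) (b 0) (b 1)
        rwa [h00, h01, map_zero] at this
      refine ⟨-(f (b 0) (b 0)) • b.coord 1, ?_⟩
      intro x y
      have hfxy : f x y = b.coord 0 x * b.coord 0 y * f (b 0) (b 0)
          + (b.coord 0 x * b.coord 1 y + b.coord 1 x * b.coord 0 y) * f (b 0) (b 1) := by
        conv_lhs => rw [hexp x, hexp y]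
        simp only [map_add, map_smul, LinearMap.add_apply, LinearMap.smul_apply, smul_eq_mul,
          e1, e2]
        ring
      rw [hprod x y, LinearMap.sub_apply, LinearMap.sub_apply, hfxy, LinearMap.smul_apply,
        LinearMap.smul_apply, hC]
      simp
      ring
    · rw [Submodule.span_singleton_le_iff_mem]
      exact ⟨C, hCc, rfl⟩
  rw [multDim, hspan, finrank_span_singleton]
  intro h
  exact hCb ((Submodule.Quotient.mk_eq_zero _).1 h)

end Aux

/-- For an extra special associative ℂ-algebra `A`: if `A ≇ J₁` then `t(A) = 2 dim A`;
if `A ≅ J₁` then `t(A) = 3` (equivalently, `dim M(J₁) = 1`). -/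
theorem tInv_of_extraSpecial (A : Type*) [NonUnitalRing A] [Module ℂ A] [SMulCommClass ℂ A A] [IsScalarTower ℂ A A]
    [FiniteDimensional ℂ A] (h : IsExtraSpecialAlg A) :
    (¬ IsJ1 A → tInv A = 2 * (Module.finrank ℂ A : ℤ)) ∧
      (IsJ1 A → tInv A = 3 ∧ multDim A = 1) := by
  refine ⟨fun hJ => ?_, fun hJ => ?_⟩
  · obtain ⟨z, φ, -, hz0, hZ, hmul, hne⟩ := exists_form h
    have hcoc := finrank_cocycles hZ hmul hne fun f hf w => by
      by_contra hw
      exact hJ (isJ1_of_cocycle hz0 hZ hmul hne hf hw)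
    have hcob := finrank_coboundaries hmul hne
    have hm := multDim_add_finrank_coboundaries (A := A)
    have hquot := Submodule.finrank_quotient_add_finrank (centerSub A)
    rw [h.2] at hquot
    rw [hcob, hcoc] at hm
    rw [tInv, ← hquot]
    zify at hm
    push_cast
    linear_combination -hm
  · obtain ⟨hA, hM⟩ := multDim_of_isJ1 hJ
    refine ⟨?_, hM⟩
    rw [tInv, hA, hM]
    norm_num
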